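/- Let E, H be complex Hilbert spaces and G₀, D₀, G, D as in the standing setup. Then G maps BD(G) into BD(D) and D maps BD(D) into BD(G); that is, G[BD(G)] ⊆ BD(D) and D[BD(D)] ⊆ BD(G). -/

import Mathlib

open scoped ComplexInnerProductSpace
open Filter Topology Classical

noncomputable section

variable {E H : Type*}
  [NormedAddCommGroup E] [InnerProductSpace ℂ E] [CompleteSpace E]
  [NormedAddCommGroup H] [InnerProductSpace ℂ H] [CompleteSpace H]

/-- The operator `G := (−D₀)*`. -/
def Gop (D₀ : H →ₗ.[ℂ] E) : E →ₗ.[ℂ] H := (-D₀).adjoint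

/-- The operator `D := −(G₀)*`. -/
def Dop (G₀ : E →ₗ.[ℂ] H) : H →ₗ.[ℂ] E := -(G₀.adjoint)

/-- Pointwise application of `G`, defined to be `0` off the domain. -/
def Gap (D₀ : H →ₗ.[ℂ] E) (u : E) : H :=
  if h : u ∈ (Gop D₀).domain then Gop D₀ ⟨u, h⟩ else 0

/-- Pointwise application of `D`, defined to be `0` off the domain. -/
def Dap (G₀ : E →ₗ.[ℂ] H) (w : H) : E :=
  if h : w ∈ (Dop G₀).domain then Dop G₀ ⟨w, h⟩ else 0

/-- The graph inner product of `D_G`: `⟪x,y⟫_E + ⟪Gx,Gy⟫_H`. -/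
def innG (D₀ : H →ₗ.[ℂ] E) (x y : E) : ℂ := ⟪x, y⟫ + ⟪Gap D₀ x, Gap D₀ y⟫

/-- The graph inner product of `D_D`: `⟪x,y⟫_H + ⟪Dx,Dy⟫_E`. -/
def innD (G₀ : E →ₗ.[ℂ] H) (x y : H) : ℂ := ⟪x, y⟫ + ⟪Dap G₀ x, Dap G₀ y⟫

/-- The boundary data space `BD(G)`, the orthogonal complement of `D(G₀)` in `D_G`. -/
def BDG (G₀ : E →ₗ.[ℂ] H) (D₀ : H →ₗ.[ℂ] E) : Set E :=
  {u | u ∈ (Gop D₀).domain ∧ ∀ v ∈ G₀.domain, innG D₀ u v = 0}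

/-- The boundary data space `BD(D)`, the orthogonal complement of `D(D₀)` in `D_D`. -/
def BDD (G₀ : E →ₗ.[ℂ] H) (D₀ : H →ₗ.[ℂ] E) : Set H :=
  {w | w ∈ (Dop G₀).domain ∧ ∀ v ∈ D₀.domain, innD G₀ w v = 0}

/-!
The operators `G` and `D` are negatives of adjoints, and the graph of `-T†` consists of the pairs
`(w, u)` with `⟪u, v⟫ + ⟪w, T v⟫ = 0` for all `v ∈ D(T)`. With `w = G u` and `T = G₀`, this is
exactly the condition that `u` be orthogonal to `D(G₀)` in `D_G`. Hence `u ∈ BD(G)` if and only if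
`G u ∈ D(D)` and `D (G u) = u`; likewise `w ∈ BD(D)` if and only if `D w ∈ D(G)` and `G (D w) = w`.
The two conditions are exchanged by `G` and `D`.
-/

open scoped LinearPMap

variable {𝕜 X Y : Type*} [RCLike 𝕜]
  [NormedAddCommGroup X] [InnerProductSpace 𝕜 X]
  [NormedAddCommGroup Y] [InnerProductSpace 𝕜 Y]

section NegAdjoint

variable [CompleteSpace X] {T : X →ₗ.[𝕜] Y} {S : Y →ₗ.[𝕜] X}

theorem mem_graph_neg_adjoint_iff (hT : Dense (T.domain : Set X)) {w : Y} {u : X} :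
    (w, u) ∈ (-T†).graph ↔ ∀ v : T.domain, inner 𝕜 u (v : X) + inner 𝕜 w (T v) = 0 := by
  rw [LinearPMap.mem_graph_iff]
  constructor
  · rintro ⟨w, rfl, rfl⟩ v
    rw [LinearPMap.neg_apply, inner_neg_left, T.adjoint_isFormalAdjoint hT w v, neg_add_cancel]
  · intro h
    have hadj (v : T.domain) : inner 𝕜 (-u) (v : X) = inner 𝕜 w (T v) := by
      rw [inner_neg_left, neg_eq_iff_add_eq_zero, h v]
    have hw : w ∈ T†.domain := LinearPMap.mem_adjoint_domain_of_exists w ⟨-u, hadj⟩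
    refine ⟨⟨w, hw⟩, rfl, ?_⟩
    rw [LinearPMap.neg_apply, neg_eq_iff_eq_neg]
    exact LinearPMap.adjoint_apply_eq hT ⟨w, hw⟩ hadj

theorem le_neg_adjoint_iff (hT : Dense (T.domain : Set X)) :
    S ≤ -T† ↔ ∀ (w : S.domain) (v : T.domain),
      inner 𝕜 (S w) (v : X) + inner 𝕜 (w : Y) (T v) = 0 := by
  simp only [← mem_graph_neg_adjoint_iff hT]
  refine ⟨fun h w ↦ LinearPMap.le_graph_of_le h (S.mem_graph w),
    fun h ↦ LinearPMap.le_of_le_graph ?_⟩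
  rintro ⟨w, u⟩ hwu
  obtain ⟨w, rfl, rfl⟩ := S.mem_graph_iff.mp hwu
  exact h w

theorem le_neg_adjoint_symm [CompleteSpace Y] (hT : Dense (T.domain : Set X))
    (hS : Dense (S.domain : Set Y)) (h : S ≤ -T†) : T ≤ -S† := by
  rw [le_neg_adjoint_iff hS]
  intro v w
  rw [← inner_conj_symm, ← inner_conj_symm (v : X), ← map_add, add_comm,
    (le_neg_adjoint_iff hT).mp h w v, map_zero]

theorem adjoint_neg (T : X →ₗ.[𝕜] Y) : (-T)† = -T† := by
  have hdom : (-T)†.domain = (-T†).domain := by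
    ext w
    change Continuous (fun v ↦ inner 𝕜 w (-(T v))) ↔ Continuous (fun v ↦ inner 𝕜 w (T v))
    simp only [inner_neg_right]
    exact (Homeomorph.neg 𝕜).comp_continuous_iff
  refine LinearPMap.ext hdom fun w hw hw' ↦ ?_
  by_cases hT : Dense (T.domain : Set X)
  · refine LinearPMap.adjoint_apply_eq (T := -T) hT ⟨w, hw⟩ fun v ↦ ?_
    rw [LinearPMap.neg_apply, LinearPMap.neg_apply, inner_neg_left, inner_neg_right,
      T.adjoint_isFormalAdjoint hT ⟨w, hw'⟩ v]
  · rw [LinearPMap.neg_apply, LinearPMap.adjoint_apply_of_not_dense hT, neg_zero,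
      LinearPMap.adjoint_apply_of_not_dense (T := -T) hT]

end NegAdjoint

section BoundaryData

/-- The total function that agrees with the partial operator `T` on its domain and takes the junk
value `0` elsewhere: `Gap D₀` and `Dap G₀` are by definition `zeroExtend (-D₀)†` and
`zeroExtend (-G₀†)`. -/
def zeroExtend (T : X →ₗ.[𝕜] Y) (u : X) : Y :=
  if h : u ∈ T.domain then T ⟨u, h⟩ else 0

/-- The boundary data space of an operator `T` extending `T₀`: the orthogonal complement of the
domain of `T₀` in the domain of `T` for the graph inner product. By definition, `BDG G₀ D₀` and
`BDD G₀ D₀` are `boundaryData G₀ (-D₀)†` and `boundaryData D₀ (-G₀†)`. -/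
def boundaryData (T₀ T : X →ₗ.[𝕜] Y) : Set X :=
  {u | u ∈ T.domain ∧
    ∀ v ∈ T₀.domain, inner 𝕜 u v + inner 𝕜 (zeroExtend T u) (zeroExtend T v) = 0}

variable {T₀ T : X →ₗ.[𝕜] Y} {S : Y →ₗ.[𝕜] X}

theorem zeroExtend_eq_of_mem_graph {u : X} {y : Y} (h : (u, y) ∈ T.graph) :
    zeroExtend T u = y := by
  obtain ⟨u, rfl, rfl⟩ := T.mem_graph_iff.mp h
  exact dif_pos u.2

theorem mem_graph_zeroExtend {u : X} (hu : u ∈ T.domain) : (u, zeroExtend T u) ∈ T.graph := by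
  rw [zeroExtend, dif_pos hu]
  exact T.mem_graph ⟨u, hu⟩

theorem mem_boundaryData_iff [CompleteSpace X] (hT₀ : Dense (T₀.domain : Set X)) (h : T₀ ≤ T)
    {u : X} : u ∈ boundaryData T₀ T ↔ ∃ y, (u, y) ∈ T.graph ∧ (y, u) ∈ (-T₀†).graph := by
  have hext (v : T₀.domain) : zeroExtend T v = T₀ v :=
    zeroExtend_eq_of_mem_graph (LinearPMap.le_graph_of_le h (T₀.mem_graph v))
  simp only [mem_graph_neg_adjoint_iff hT₀, ← hext]
  constructor
  · rintro ⟨hu, horth⟩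
    exact ⟨zeroExtend T u, mem_graph_zeroExtend hu, fun v ↦ horth v v.2⟩
  · rintro ⟨y, huy, horth⟩
    obtain rfl := zeroExtend_eq_of_mem_graph huy
    exact ⟨LinearPMap.mem_domain_of_mem_graph huy, fun v hv ↦ horth ⟨v, hv⟩⟩

theorem mapsTo_boundaryData_neg_adjoint [CompleteSpace X] [CompleteSpace Y]
    (hT : Dense (T.domain : Set X)) (hS : Dense (S.domain : Set Y)) (h : T ≤ -S†) :
    Set.MapsTo (zeroExtend (-S†)) (boundaryData T (-S†)) (boundaryData S (-T†)) := by
  intro u hu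
  obtain ⟨y, huy, hyu⟩ := (mem_boundaryData_iff hT h).mp hu
  rw [zeroExtend_eq_of_mem_graph huy]
  exact (mem_boundaryData_iff hS (le_neg_adjoint_symm hS hT h)).mpr ⟨u, hyu, huy⟩

end BoundaryData

theorem bdg_mapsTo_general [CompleteSpace X] [CompleteSpace Y]
    {G₀ : X →ₗ.[𝕜] Y} {D₀ : Y →ₗ.[𝕜] X}
    (hG₀ : Dense (G₀.domain : Set X)) (hD₀ : Dense (D₀.domain : Set Y)) (h : G₀ ≤ (-D₀)†) :
    Set.MapsTo (zeroExtend (-D₀)†) (boundaryData G₀ (-D₀)†) (boundaryData D₀ (-G₀†)) ∧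
    Set.MapsTo (zeroExtend (-G₀†)) (boundaryData D₀ (-G₀†)) (boundaryData G₀ (-D₀)†) := by
  rw [adjoint_neg] at h ⊢
  exact ⟨mapsTo_boundaryData_neg_adjoint hG₀ hD₀ h,
    mapsTo_boundaryData_neg_adjoint hD₀ hG₀ (le_neg_adjoint_symm hD₀ hG₀ h)⟩

/-- `G` maps `BD(G)` into `BD(D)` and `D` maps `BD(D)` into `BD(G)`:
`G[BD(G)] ⊆ BD(D)` and `D[BD(D)] ⊆ BD(G)`. -/
theorem bdg_mapsTo (G₀ : E →ₗ.[ℂ] H) (D₀ : H →ₗ.[ℂ] E)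
    (hG₀dense : Dense (G₀.domain : Set E)) (hD₀dense : Dense (D₀.domain : Set H))
    (hG₀closed : G₀.IsClosed) (hD₀closed : D₀.IsClosed)
    (hsub : G₀ ≤ Gop D₀) :
    (∀ u ∈ BDG G₀ D₀, Gap D₀ u ∈ BDD G₀ D₀) ∧
    (∀ w ∈ BDD G₀ D₀, Dap G₀ w ∈ BDG G₀ D₀) := by
  obtain ⟨hG, hD⟩ := bdg_mapsTo_general hG₀dense hD₀dense hsub
  exact ⟨fun _ hu ↦ hG hu, fun _ hw ↦ hD hw⟩
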